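/- Let H be a real Hilbert space, let C ⊆ H be a nonempty closed convex set, and let f : H → ℝ be convex with a gradient map f' : H → H (f has gradient f'(x) at every x) such that f' is Lipschitz with constant L > 0 (so f' is (1/L)-cocoercive), and set β := 1/L. Suppose the set Ω := {x* ∈ C | ∀ y ∈ C, f(x*) ≤ f(y)} of minimizers of f over C is nonempty. Assume the variable-metric hypotheses of the context: operators U_k, V_k with ⟨U_k x, x⟩ ≥ α‖x‖² (α > 0), V_k∘U_k = U_k∘V_k = id, ‖U_k‖ ≤ μ, (1 + η_k)⟨U_{k+1}x, x⟩ ≥ ⟨U_k x, x⟩ with η_k ≥ 0 summable; parameters γ_k ∈ (0, 2β/‖U_k‖), α_k := 2β/(4β − γ_k‖U_k‖), λ_k with λ̲ ≤ λ_k ≤ 1/α_k − τ (λ̲, τ > 0) and γ_k ≥ γ̲ > 0; errors a_k, b_k with ∑_k λ_k‖a_k‖ < ∞, ∑_k λ_k‖b_k‖ < ∞; and projection maps P_k : H → H satisfying, for every y ∈ H, P_k y ∈ C and ⟨V_k(y − P_k y), z − P_k y⟩ ≤ 0 for all z ∈ C. Define from x_0 ∈ H the iteration x_{k+1} = x_k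 + λ_k·(P_k(x_k − γ_k·U_k(f'(x_k) + b_k)) + a_k − x_k). Then there exists p ∈ Ω such that x_k converges weakly to p, i.e., ⟨x_k, y⟩ → ⟨p, y⟩ for every y ∈ H. -/

import Mathlib

open RealInnerProductSpace Filter

/-!
The minimizers of `f` over `C` are the solutions of the variational inequality for the gradient
`f'`, which is cocoercive by the Baillon–Haddad theorem; only cocoercivity matters from there on.

For a solution `p`, the obtuse-angle inequality of the projection and cocoercivity show that one
exact step decreases `⟪V k (x - p), x - p⟫` by a fixed multiple of `⟪V k (x - q), x - q⟫`, where
`q` is the projected forward point. The errors and the change of metric perturb this descent by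
summable amounts, so `⟪V k (x k - p), x k - p⟫` converges for every solution `p` and
`x k - q k → 0`.

Up to a convergent scalar factor the metrics `V k` decrease, so they converge strongly, and
Opial's lemma survives the change of metric: it remains to see that weak cluster points of `x`
solve the variational inequality. Along an ultrafilter, cocoercivity upgrades `x k ⇀ p` to
norm convergence `f' (x k) → f' p`, and the variational inequality passes to the limit.
-/

open scoped Topology

section RealSequences

theorem exists_tendsto_of_succ_le_add {D ε : ℕ → ℝ} (hD : ∀ k, 0 ≤ D k) (hε : Summable ε)
    (h : ∀ k, D (k + 1) ≤ D k + ε k) : ∃ l, Tendsto D atTop (𝓝 l) := by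
  have hsum := hε.hasSum.tendsto_sum_nat
  have hanti : Antitone fun k => D k - ∑ i ∈ Finset.range k, ε i :=
    antitone_nat_of_succ_le fun k => by
      rw [Finset.sum_range_succ]
      linarith [h k]
  have hbdd : BddBelow (Set.range fun k => D k - ∑ i ∈ Finset.range k, ε i) := by
    obtain ⟨M, hM⟩ := hsum.bddAbove_range
    refine ⟨-M, ?_⟩
    rintro _ ⟨k, rfl⟩
    linarith [hD k, hM ⟨k, rfl⟩]
  exact ⟨_, by simpa using (tendsto_atTop_ciInf hanti hbdd).add hsum⟩

/-- The accumulated discount `exp (-(s 0 + ⋯ + s (k - 1)))`: multiplying a sequence that grows by a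
factor of at most `exp (s k)` in step `k` by it absorbs the growth. -/
noncomputable def discount (s : ℕ → ℝ) (k : ℕ) : ℝ :=
  Real.exp (-∑ i ∈ Finset.range k, s i)

theorem discount_pos (s : ℕ → ℝ) (k : ℕ) : 0 < discount s k :=
  Real.exp_pos _

theorem discount_succ_mul_exp (s : ℕ → ℝ) (k : ℕ) :
    discount s (k + 1) * Real.exp (s k) = discount s k := by
  rw [discount, discount, ← Real.exp_add, Finset.sum_range_succ]
  congr 1
  ring

theorem discount_le_one {s : ℕ → ℝ} (hs0 : ∀ k, 0 ≤ s k) (k : ℕ) : discount s k ≤ 1 :=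
  Real.exp_le_one_iff.2 (neg_nonpos.2 (Finset.sum_nonneg fun i _ => hs0 i))

theorem tendsto_inv_discount {s : ℕ → ℝ} (hs : Summable s) :
    Tendsto (fun k => (discount s k)⁻¹) atTop (𝓝 (Real.exp (∑' i, s i))) := by
  simp only [discount, Real.exp_neg, inv_inv]
  exact hs.hasSum.tendsto_sum_nat.rexp

theorem exists_tendsto_of_succ_le_exp_mul {D s ε : ℕ → ℝ} (hD : ∀ k, 0 ≤ D k)
    (hs0 : ∀ k, 0 ≤ s k) (hs : Summable s) (hε : Summable ε)
    (h : ∀ k, D (k + 1) ≤ Real.exp (s k) * (D k + ε k)) : ∃ l, Tendsto D atTop (𝓝 l) := by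
  have hdiscounted : ∀ k, discount s (k + 1) * D (k + 1) ≤
      discount s k * D k + discount s k * ε k := fun k =>
    calc discount s (k + 1) * D (k + 1)
        ≤ discount s (k + 1) * (Real.exp (s k) * (D k + ε k)) :=
          mul_le_mul_of_nonneg_left (h k) (discount_pos s _).le
      _ = discount s k * D k + discount s k * ε k := by
          rw [← mul_assoc, discount_succ_mul_exp, mul_add]
  have hsum : Summable fun k => discount s k * ε k :=
    hε.norm.of_norm_bounded fun k => by
      rw [norm_mul, Real.norm_of_nonneg (discount_pos s k).le]
      exact mul_le_of_le_one_left (norm_nonneg _) (discount_le_one hs0 k)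
  obtain ⟨l, hl⟩ := exists_tendsto_of_succ_le_add
    (fun k => mul_nonneg (discount_pos s k).le (hD k)) hsum hdiscounted
  refine ⟨_, ((tendsto_inv_discount hs).mul hl).congr fun k => ?_⟩
  exact inv_mul_cancel_left₀ (discount_pos s k).ne' (D k)

/-- A deterministic Robbins–Siegmund lemma. -/
theorem exists_tendsto_and_tendsto_zero_of_succ_le_exp_mul {D s r ε : ℕ → ℝ} (hD : ∀ k, 0 ≤ D k)
    (hr : ∀ k, 0 ≤ r k) (hs0 : ∀ k, 0 ≤ s k) (hs : Summable s) (hε : Summable ε)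
    (h : ∀ k, D (k + 1) ≤ Real.exp (s k) * (D k - r k + ε k)) :
    (∃ l, Tendsto D atTop (𝓝 l)) ∧ Tendsto r atTop (𝓝 0) := by
  obtain ⟨l, hl⟩ := exists_tendsto_of_succ_le_exp_mul hD hs0 hs hε fun k =>
    (h k).trans (by gcongr; linarith [hr k])
  refine ⟨⟨l, hl⟩, ?_⟩
  have hexp : Tendsto (fun k => Real.exp (-s k)) atTop (𝓝 1) := by
    simpa using hs.tendsto_atTop_zero.neg.rexp
  have hupper : Tendsto (fun k => D k - Real.exp (-s k) * D (k + 1) + ε k) atTop (𝓝 0) := by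
    simpa using (hl.sub (hexp.mul ((tendsto_add_atTop_iff_nat 1).2 hl))).add hε.tendsto_atTop_zero
  refine squeeze_zero hr (fun k => ?_) hupper
  have := mul_le_mul_of_nonneg_left (h k) (Real.exp_pos (-s k)).le
  rw [← mul_assoc, ← Real.exp_add, neg_add_cancel, Real.exp_zero, one_mul] at this
  linarith

end RealSequences

section PositiveOperators

variable {H : Type*} [NormedAddCommGroup H] [InnerProductSpace ℝ H]

theorem inner_apply_sq_le_of_isPositive {T : H →L[ℝ] H} (hT : T.IsPositive) (z w : H) :
    ⟪T z, w⟫ ^ 2 ≤ ⟪T z, z⟫ * ⟪T w, w⟫ :=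
  LinearMap.BilinForm.apply_sq_le_of_symm (innerₗ H ∘ₗ (T : H →ₗ[ℝ] H)) hT.inner_nonneg_left
    ⟨fun u v => (hT.inner_left_eq_inner_right u v).trans (real_inner_comm _ _)⟩ z w

theorem norm_apply_sq_le_of_isPositive {T : H →L[ℝ] H} (hT : T.IsPositive) {K : ℝ}
    (hK : ∀ w, ⟪T w, w⟫ ≤ K * ‖w‖ ^ 2) (z : H) : ‖T z‖ ^ 2 ≤ K * ⟪T z, z⟫ := by
  rcases eq_or_ne (T z) 0 with hz | hz
  · simp [hz]
  have hpos : 0 < ‖T z‖ ^ 2 := by positivity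
  refine le_of_mul_le_mul_right ?_ hpos
  calc ‖T z‖ ^ 2 * ‖T z‖ ^ 2
      = ⟪T z, T z⟫ ^ 2 := by rw [real_inner_self_eq_norm_sq]; ring
    _ ≤ ⟪T z, z⟫ * ⟪T (T z), T z⟫ := inner_apply_sq_le_of_isPositive hT z (T z)
    _ ≤ ⟪T z, z⟫ * (K * ‖T z‖ ^ 2) :=
        mul_le_mul_of_nonneg_left (hK _) (hT.inner_nonneg_left z)
    _ = K * ⟪T z, z⟫ * ‖T z‖ ^ 2 := by ring

theorem inner_apply_self_le_opNorm_mul_sq (T : H →L[ℝ] H) (z : H) :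
    ⟪T z, z⟫ ≤ ‖T‖ * ‖z‖ ^ 2 :=
  calc ⟪T z, z⟫ ≤ ‖T z‖ * ‖z‖ := real_inner_le_norm _ _
    _ ≤ ‖T‖ * ‖z‖ * ‖z‖ := by gcongr; exact T.le_opNorm z
    _ = ‖T‖ * ‖z‖ ^ 2 := by ring

theorem isPositive_of_coercive {T : H →L[ℝ] H} (hT : T.IsSymmetric) {α : ℝ} (hα : 0 ≤ α)
    (h : ∀ z, α * ‖z‖ ^ 2 ≤ ⟪T z, z⟫) : T.IsPositive :=
  (ContinuousLinearMap.isPositive_iff T).2 ⟨hT, fun z => le_trans (by positivity) (h z)⟩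

theorem inner_apply_add_self_le_of_isPositive {T : H →L[ℝ] H} (hT : T.IsPositive) {M : ℝ}
    (hM : ∀ w, ⟪T w, w⟫ ≤ M * ‖w‖ ^ 2) (y e : H) :
    ⟪T (y + e), y + e⟫ ≤ (1 + ‖e‖) * (⟪T y, y⟫ + M * ‖e‖) := by
  rcases eq_or_ne e 0 with rfl | he
  · simp
  have hpos : 0 < ‖e‖ := norm_pos_iff.2 he
  -- Young's inequality with weight `‖e‖` bounds the cross term.
  have hyoung := hT.inner_nonneg_left (‖e‖ • y - e)
  simp only [map_add, map_sub, map_smul, inner_add_left, inner_add_right, inner_sub_left,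
    inner_sub_right, real_inner_smul_left, real_inner_smul_right,
    hT.inner_left_eq_inner_right e y, real_inner_comm (T y) e] at hyoung ⊢
  refine le_of_mul_le_mul_left ?_ hpos
  linarith [mul_le_mul_of_nonneg_left (hM e) (add_nonneg zero_le_one hpos.le)]

theorem inner_apply_relaxation_le_of_isPositive {T : H →L[ℝ] H} (hT : T.IsPositive) {x q p : H}
    {c ρ τ t : ℝ} (hτ : 0 ≤ τ) (hρ : 0 ≤ ρ) (hρt : ρ ≤ t) (htc : t ≤ 2 * c - τ)
    (h : c * ⟪T (x - q), x - q⟫ ≤ ⟪T (x - q), x - p⟫) :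
    ⟪T (x + t • (q - x) - p), x + t • (q - x) - p⟫ ≤
      ⟪T (x - p), x - p⟫ - ρ * τ * ⟪T (x - q), x - q⟫ := by
  have hrelax : x + t • (q - x) - p = (x - p) - t • (x - q) := by module
  have hexpand : ⟪T (x + t • (q - x) - p), x + t • (q - x) - p⟫ =
      ⟪T (x - p), x - p⟫ - 2 * t * ⟪T (x - q), x - p⟫ + t ^ 2 * ⟪T (x - q), x - q⟫ := by
    rw [hrelax]
    generalize x - p = u, x - q = v
    simp only [map_sub, map_smul, inner_sub_left, inner_sub_right, real_inner_smul_left,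
      real_inner_smul_right, hT.inner_left_eq_inner_right u v, real_inner_comm (T v) u]
    ring
  have hcoeff : ρ * τ ≤ t * (2 * c - t) :=
    mul_le_mul hρt (by linarith) hτ (hρ.trans hρt)
  have hgain := mul_le_mul_of_nonneg_right hcoeff (hT.inner_nonneg_left (x - q))
  have hcross := mul_le_mul_of_nonneg_left h (mul_nonneg zero_le_two (hρ.trans hρt))
  rw [hexpand]
  linarith

/-- Vigier's theorem. -/
theorem exists_tendsto_apply_of_antitone [CompleteSpace H] {T : ℕ → H →L[ℝ] H}
    (hT : ∀ k, (T k).IsPositive) (hanti : Antitone T) (z : H) :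
    ∃ v, Tendsto (fun k => T k z) atTop (𝓝 v) := by
  have hform : Antitone fun k => ⟪T k z, z⟫ := fun m n hmn => by
    simpa [inner_sub_left] using (hanti hmn).inner_nonneg_left z
  have hdiff : ∀ m n, m ≤ n → ‖T m z - T n z‖ ^ 2 ≤ ‖T 0‖ * (⟪T m z, z⟫ - ⟪T n z, z⟫) := by
    intro m n hmn
    have hbound : ∀ w, ⟪(T m - T n) w, w⟫ ≤ ‖T 0‖ * ‖w‖ ^ 2 := fun w => by
      have hm := (hanti (Nat.zero_le m)).inner_nonneg_left w
      have hn := (hT n).inner_nonneg_left w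
      have h0 := inner_apply_self_le_opNorm_mul_sq (T 0) w
      rw [sub_apply, inner_sub_left] at hm ⊢
      linarith
    simpa [inner_sub_left] using norm_apply_sq_le_of_isPositive (hanti hmn) hbound z
  have hbdd : BddBelow (Set.range fun k => ⟪T k z, z⟫) :=
    ⟨0, by rintro _ ⟨k, rfl⟩; exact (hT k).inner_nonneg_left z⟩
  obtain ⟨l, hl⟩ : ∃ l, Tendsto (fun k => ⟪T k z, z⟫) atTop (𝓝 l) :=
    ⟨_, tendsto_atTop_ciInf hform hbdd⟩
  refine cauchySeq_tendsto_of_complete ?_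
  refine cauchySeq_of_le_tendsto_0' (fun m => √(‖T 0‖ * (⟪T m z, z⟫ - l))) (fun m n hmn => ?_) ?_
  · rw [dist_eq_norm]
    refine Real.le_sqrt_of_sq_le ((hdiff m n hmn).trans ?_)
    gcongr
    exact hform.le_of_tendsto hl n
  · simpa using ((hl.sub_const l).const_mul ‖T 0‖).sqrt

section Inverse

variable {U V : H →L[ℝ] H}

theorem isPositive_of_leftInverse (hU : U.IsPositive) (hUV : Function.LeftInverse U V) :
    V.IsPositive := by
  refine (ContinuousLinearMap.isPositive_iff V).2 ⟨fun z w => ?_, fun z => ?_⟩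
  · calc ⟪V z, w⟫ = ⟪V z, U (V w)⟫ := by rw [hUV]
      _ = ⟪U (V z), V w⟫ := (hU.inner_left_eq_inner_right _ _).symm
      _ = ⟪z, V w⟫ := by rw [hUV]
  · simpa only [hUV z] using hU.inner_nonneg_right (V z)

theorem sq_norm_le_opNorm_mul_inner_of_leftInverse (hU : U.IsPositive)
    (hUV : Function.LeftInverse U V) (z : H) : ‖z‖ ^ 2 ≤ ‖U‖ * ⟪V z, z⟫ := by
  simpa only [hUV z, real_inner_comm (V z) z] using
    norm_apply_sq_le_of_isPositive hU (inner_apply_self_le_opNorm_mul_sq U) (V z)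

theorem norm_apply_le_of_leftInverse {α : ℝ} (hα : 0 < α)
    (hU : ∀ z, α * ‖z‖ ^ 2 ≤ ⟪U z, z⟫) (hUV : Function.LeftInverse U V) (z : H) :
    ‖V z‖ ≤ α⁻¹ * ‖z‖ := by
  rw [inv_mul_eq_div, le_div_iff₀' hα]
  rcases (norm_nonneg (V z)).eq_or_lt with hz | hz
  · simp [← hz]
  refine le_of_mul_le_mul_right ?_ hz
  calc α * ‖V z‖ * ‖V z‖ = α * ‖V z‖ ^ 2 := by ring
    _ ≤ ⟪U (V z), V z⟫ := hU (V z)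
    _ ≤ ‖z‖ * ‖V z‖ := by rw [hUV]; exact real_inner_le_norm _ _

theorem inner_apply_le_mul_inner_of_leftInverse {U' V' : H →L[ℝ] H} (hU : U.IsPositive)
    (hUV : Function.LeftInverse U V) (hUV' : Function.LeftInverse U' V') {c : ℝ}
    (hc : 0 < c) (hle : ∀ z, ⟪U z, z⟫ ≤ c * ⟪U' z, z⟫) (z : H) :
    ⟪V' z, z⟫ ≤ c * ⟪V z, z⟫ := by
  have hnonneg := hU.inner_nonneg_left (c • V z - V' z)
  have hexpand : ⟪U (c • V z - V' z), c • V z - V' z⟫ =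
      c * (c * ⟪V z, z⟫) - 2 * (c * ⟪V' z, z⟫) + ⟪U (V' z), V' z⟫ := by
    simp only [map_sub, map_smul, hUV z, inner_sub_left, inner_sub_right, real_inner_smul_left,
      real_inner_smul_right, hU.inner_left_eq_inner_right (V' z) (V z), real_inner_comm z]
    ring
  have hV' := hle (V' z)
  rw [hUV' z, ← real_inner_comm z (V' z)] at hV'
  refine le_of_mul_le_mul_left ?_ hc
  linarith

end Inverse

end PositiveOperators

section WeakConvergence

theorem isBoundedUnder_norm_of_sub {E ι : Type*} [SeminormedAddCommGroup E]
    {x y : ι → E} {l : Filter ι} (hxy : l.IsBoundedUnder (· ≤ ·) fun i => ‖x i - y i‖)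
    (hy : l.IsBoundedUnder (· ≤ ·) fun i => ‖y i‖) :
    l.IsBoundedUnder (· ≤ ·) fun i => ‖x i‖ :=
  (isBoundedUnder_le_add hxy hy).mono_le <| Eventually.of_forall fun i => by
    simpa using norm_add_le (x i - y i) (y i)

variable {H ι : Type*} [NormedAddCommGroup H] [InnerProductSpace ℝ H]

/-- Weak convergence of a family in a real Hilbert space along a filter, tested against inner
products, which by Riesz representation are all the continuous functionals. -/
def WeaklyTendsto (x : ι → H) (l : Filter ι) (p : H) : Prop :=
  ∀ y : H, Tendsto (fun i => ⟪x i, y⟫) l (𝓝 ⟪p, y⟫)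

variable {x y : ι → H} {l : Filter ι} {p q : H}

theorem weaklyTendsto_of_tendsto (hx : Tendsto x l (𝓝 p)) : WeaklyTendsto x l p := fun _ =>
  hx.inner tendsto_const_nhds

theorem WeaklyTendsto.sub (hx : WeaklyTendsto x l p) (hy : WeaklyTendsto y l q) :
    WeaklyTendsto (fun i => x i - y i) l (p - q) := fun w => by
  simpa only [inner_sub_left] using (hx w).sub (hy w)

theorem WeaklyTendsto.of_sub_tendsto_zero (hx : WeaklyTendsto x l p)
    (hxy : Tendsto (fun i => x i - y i) l (𝓝 0)) : WeaklyTendsto y l p := by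
  simpa using hx.sub (weaklyTendsto_of_tendsto hxy)

theorem WeaklyTendsto.inner_tendsto (hx : WeaklyTendsto x l p)
    (hbdd : l.IsBoundedUnder (· ≤ ·) fun i => ‖x i‖) (hy : Tendsto y l (𝓝 q)) :
    Tendsto (fun i => ⟪x i, y i⟫) l (𝓝 ⟪p, q⟫) := by
  have herror : Tendsto (fun i => ⟪y i - q, x i⟫) l (𝓝 0) :=
    (tendsto_sub_nhds_zero_iff.2 hy).op_zero_isBoundedUnder_le hbdd (fun u v => ⟪u, v⟫)
      norm_inner_le_norm
  have hsplit : ∀ i, ⟪x i, q⟫ + ⟪y i - q, x i⟫ = ⟪x i, y i⟫ := fun i => by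
    rw [real_inner_comm (x i), inner_sub_right]
    ring
  simpa only [hsplit, add_zero] using (hx q).add herror

theorem exists_weaklyTendsto_ultrafilter [CompleteSpace H] {F : Ultrafilter ι}
    (hbdd : (F : Filter ι).IsBoundedUnder (· ≤ ·) fun i => ‖x i‖) :
    ∃ p, WeaklyTendsto x F p := by
  obtain ⟨R, hR⟩ := hbdd
  let toWeak : H → WeakDual ℝ H := fun z => StrongDual.toWeakDual (InnerProductSpace.toDual ℝ H z)
  have hball : ∀ᶠ i in (F : Filter ι),
      toWeak (x i) ∈ WeakDual.toStrongDual ⁻¹' Metric.closedBall (0 : StrongDual ℝ H) R := by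
    filter_upwards [eventually_map.1 hR] with i hi
    simpa [toWeak] using hi
  obtain ⟨g, -, hg⟩ := (WeakDual.isCompact_closedBall (𝕜 := ℝ) (0 : StrongDual ℝ H) R)
    |>.ultrafilter_le_nhds (F.map (toWeak ∘ x)) (le_principal_iff.2 hball)
  refine ⟨(InnerProductSpace.toDual ℝ H).symm (WeakDual.toStrongDual g), fun y => ?_⟩
  rw [InnerProductSpace.toDual_symm_apply]
  exact ((WeakDual.eval_continuous y).tendsto g).comp hg

end WeakConvergence

section VariableMetric

variable {H : Type*} [NormedAddCommGroup H] [InnerProductSpace ℝ H]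

/-- A variable metric: the squared norms `z ↦ ⟪V k z, z⟫` are uniformly equivalent to `‖z‖ ^ 2`,
with constants `M` and `μ`, and decrease in `k` up to the factors `1 + η k`, whose product
converges. -/
structure IsVariableMetric (V : ℕ → H →L[ℝ] H) (M μ : ℝ) (η : ℕ → ℝ) : Prop where
  isPositive : ∀ k, (V k).IsPositive
  norm_apply_le : ∀ k z, ‖V k z‖ ≤ M * ‖z‖
  sq_norm_le : ∀ k z, ‖z‖ ^ 2 ≤ μ * ⟪V k z, z⟫
  succ_le : ∀ k z, ⟪V (k + 1) z, z⟫ ≤ (1 + η k) * ⟪V k z, z⟫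
  nonneg : ∀ k, 0 ≤ η k
  summable : Summable η

theorem isVariableMetric_of_leftInverse {U V : ℕ → H →L[ℝ] H} {α μ : ℝ} {η : ℕ → ℝ}
    (hα : 0 < α) (hU : ∀ k, (U k).IsPositive) (hUα : ∀ k z, α * ‖z‖ ^ 2 ≤ ⟪U k z, z⟫)
    (hUμ : ∀ k, ‖U k‖ ≤ μ) (hUV : ∀ k, Function.LeftInverse (U k) (V k))
    (hUη : ∀ k z, ⟪U k z, z⟫ ≤ (1 + η k) * ⟪U (k + 1) z, z⟫) (hη0 : ∀ k, 0 ≤ η k)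
    (hη : Summable η) : IsVariableMetric V α⁻¹ μ η where
  isPositive k := isPositive_of_leftInverse (hU k) (hUV k)
  norm_apply_le k := norm_apply_le_of_leftInverse hα (hUα k) (hUV k)
  sq_norm_le k z :=
    (sq_norm_le_opNorm_mul_inner_of_leftInverse (hU k) (hUV k) z).trans <|
      mul_le_mul_of_nonneg_right (hUμ k)
        ((isPositive_of_leftInverse (hU k) (hUV k)).inner_nonneg_left z)
  succ_le k := inner_apply_le_mul_inner_of_leftInverse (hU k) (hUV k) (hUV (k + 1))
    (by linarith [hη0 k]) (hUη k)
  nonneg := hη0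
  summable := hη

namespace IsVariableMetric

variable {V : ℕ → H →L[ℝ] H} {M μ : ℝ} {η : ℕ → ℝ}

theorem inner_apply_self_le (hV : IsVariableMetric V M μ η) (k : ℕ) (z : H) :
    ⟪V k z, z⟫ ≤ M * ‖z‖ ^ 2 :=
  calc ⟪V k z, z⟫ ≤ ‖V k z‖ * ‖z‖ := real_inner_le_norm _ _
    _ ≤ M * ‖z‖ * ‖z‖ := by gcongr; exact hV.norm_apply_le k z
    _ = M * ‖z‖ ^ 2 := by ring

theorem antitone_discount_smul (hV : IsVariableMetric V M μ η) :
    Antitone fun k => discount η k • V k := by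
  refine antitone_nat_of_succ_le fun k => ?_
  have hsymm := ((hV.isPositive k).smul_of_nonneg (discount_pos η k).le).isSymmetric.sub
    ((hV.isPositive (k + 1)).smul_of_nonneg (discount_pos η (k + 1)).le).isSymmetric
  refine (ContinuousLinearMap.isPositive_iff _).2 ⟨hsymm, fun z => ?_⟩
  rw [sub_apply, smul_apply, smul_apply, inner_sub_left, real_inner_smul_left,
    real_inner_smul_left, sub_nonneg, ← discount_succ_mul_exp η k, mul_assoc]
  have hgrowth : 1 + η k ≤ Real.exp (η k) := by linarith [Real.add_one_le_exp (η k)]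
  exact mul_le_mul_of_nonneg_left ((hV.succ_le k z).trans
    (mul_le_mul_of_nonneg_right hgrowth ((hV.isPositive k).inner_nonneg_left z)))
    (discount_pos η _).le

theorem exists_tendsto_apply [CompleteSpace H] (hV : IsVariableMetric V M μ η) (z : H) :
    ∃ v, Tendsto (fun k => V k z) atTop (𝓝 v) := by
  obtain ⟨v, hv⟩ := exists_tendsto_apply_of_antitone
    (fun k => (hV.isPositive k).smul_of_nonneg (discount_pos η k).le) hV.antitone_discount_smul z
  refine ⟨_, ((tendsto_inv_discount hV.summable).smul hv).congr fun k => ?_⟩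
  exact inv_smul_smul₀ (discount_pos η k).ne' (V k z)

theorem tendsto_zero (hV : IsVariableMetric V M μ η) {l : Filter ℕ} {x : ℕ → H}
    (hx : Tendsto (fun k => ⟪V k (x k), x k⟫) l (𝓝 0)) : Tendsto x l (𝓝 0) := by
  have hsq : Tendsto (fun k => ‖x k‖ ^ 2) l (𝓝 0) :=
    squeeze_zero (fun k => by positivity) (fun k => hV.sq_norm_le k (x k))
      (by simpa using hx.const_mul μ)
  exact tendsto_zero_iff_norm_tendsto_zero.2 (by simpa using hsq.sqrt)

theorem isBoundedUnder_norm (hV : IsVariableMetric V M μ η) {l : Filter ℕ} {x : ℕ → H} {c : ℝ}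
    (hx : Tendsto (fun k => ⟪V k (x k), x k⟫) l (𝓝 c)) :
    l.IsBoundedUnder (· ≤ ·) fun k => ‖x k‖ :=
  (hx.const_mul μ).sqrt.isBoundedUnder_le.mono_le
    (Eventually.of_forall fun k => Real.le_sqrt_of_sq_le (hV.sq_norm_le k (x k)))

/-- Opial's argument: since `V k (p - q)` converges in norm, the cross term
`⟪x k - p, V k (p - q)⟫` can be evaluated along both filters. -/
theorem eq_of_weaklyTendsto [CompleteSpace H] (hV : IsVariableMetric V M μ η) {x : ℕ → H}
    {p q : H} {c d : ℝ} (hp : Tendsto (fun k => ⟪V k (x k - p), x k - p⟫) atTop (𝓝 c))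
    (hq : Tendsto (fun k => ⟪V k (x k - q), x k - q⟫) atTop (𝓝 d)) {F G : Filter ℕ} [F.NeBot]
    [G.NeBot] (hF : F ≤ atTop) (hG : G ≤ atTop) (hxp : WeaklyTendsto x F p)
    (hxq : WeaklyTendsto x G q) : p = q := by
  obtain ⟨v, hv⟩ := hV.exists_tendsto_apply (p - q)
  have hvv : Tendsto (fun k => ⟪V k (p - q), p - q⟫) atTop (𝓝 ⟪v, p - q⟫) :=
    hv.inner tendsto_const_nhds
  have hexpand : ∀ k, ⟪V k (x k - q), x k - q⟫ - ⟪V k (x k - p), x k - p⟫ -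
      ⟪V k (p - q), p - q⟫ = 2 * ⟪x k - p, V k (p - q)⟫ := fun k => by
    have hsplit : x k - q = (x k - p) + (p - q) := by abel
    rw [hsplit]
    simp only [map_add, inner_add_left, inner_add_right,
      (hV.isPositive k).inner_left_eq_inner_right (x k - p) (p - q),
      real_inner_comm (x k - p) (V k (p - q))]
    ring
  have hcross := (hq.sub hp).sub hvv
  simp only [hexpand] at hcross
  have hcluster : ∀ {E : Filter ℕ} [E.NeBot] {w : H}, E ≤ atTop → WeaklyTendsto x E w →
      d - c - ⟪v, p - q⟫ = 2 * ⟪w - p, v⟫ := fun {E _ w} hE hw =>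
    tendsto_nhds_unique (hcross.mono_left hE)
      (((hw.sub (weaklyTendsto_of_tendsto tendsto_const_nhds)).inner_tendsto
        (hV.isBoundedUnder_norm (hp.mono_left hE)) (hv.mono_left hE)).const_mul 2)
  have hvpq : ⟪v, p - q⟫ = 0 := by
    have h := (hcluster hF hxp).symm.trans (hcluster hG hxq)
    rw [sub_self, inner_zero_left, ← neg_sub p q, inner_neg_left, real_inner_comm] at h
    linarith
  have hconst : Tendsto (fun _ : ℕ => p - q) atTop (𝓝 0) := hV.tendsto_zero (hvpq ▸ hvv)
  exact sub_eq_zero.1 (tendsto_nhds_unique tendsto_const_nhds hconst)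

theorem exists_weaklyTendsto [CompleteSpace H] (hV : IsVariableMetric V M μ η) {x : ℕ → H}
    {S : Set H} (hS : S.Nonempty)
    (hlim : ∀ p ∈ S, ∃ c, Tendsto (fun k => ⟪V k (x k - p), x k - p⟫) atTop (𝓝 c))
    (hcluster : ∀ F : Ultrafilter ℕ, ↑F ≤ (atTop : Filter ℕ) → ∀ p, WeaklyTendsto x F p → p ∈ S) :
    ∃ p ∈ S, WeaklyTendsto x atTop p := by
  obtain ⟨p₀, hp₀⟩ := hS
  obtain ⟨c₀, hc₀⟩ := hlim p₀ hp₀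
  have hexists : ∀ F : Ultrafilter ℕ, ↑F ≤ (atTop : Filter ℕ) → ∃ p, WeaklyTendsto x F p :=
    fun F hF => exists_weaklyTendsto_ultrafilter (isBoundedUnder_norm_of_sub
      (hV.isBoundedUnder_norm (hc₀.mono_left hF)) isBoundedUnder_const)
  obtain ⟨p, hp⟩ := hexists (Ultrafilter.of atTop) (Ultrafilter.of_le _)
  have hpS := hcluster _ (Ultrafilter.of_le _) p hp
  obtain ⟨c, hc⟩ := hlim p hpS
  refine ⟨p, hpS, fun y => tendsto_iff_ultrafilter _ _ _ |>.2 fun G hG => ?_⟩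
  obtain ⟨q, hq⟩ := hexists G hG
  obtain ⟨d, hd⟩ := hlim q (hcluster G hG q hq)
  rw [hV.eq_of_weaklyTendsto hc hd (Ultrafilter.of_le _) hG hp hq]
  exact hq y

theorem exists_tendsto_and_tendsto_zero_of_quasiFejer (hV : IsVariableMetric V M μ η)
    {x y e : ℕ → H} {p : H} {r : ℕ → ℝ} (hr : ∀ k, 0 ≤ r k) (hxy : ∀ k, x (k + 1) = y k + e k)
    (he : Summable fun k => ‖e k‖)
    (hy : ∀ k, ⟪V k (y k - p), y k - p⟫ ≤ ⟪V k (x k - p), x k - p⟫ - r k) :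
    (∃ c, Tendsto (fun k => ⟪V k (x k - p), x k - p⟫) atTop (𝓝 c)) ∧
      Tendsto r atTop (𝓝 0) := by
  refine exists_tendsto_and_tendsto_zero_of_succ_le_exp_mul
    (fun k => (hV.isPositive k).inner_nonneg_left _) hr
    (fun k => add_nonneg (hV.nonneg k) (norm_nonneg (e k))) (hV.summable.add he)
    (he.mul_left M) fun k => ?_
  have hstep : x (k + 1) - p = (y k - p) + e k := by rw [hxy]; abel
  have hperturb := inner_apply_add_self_le_of_isPositive (hV.isPositive k)
    (hV.inner_apply_self_le k) (y k - p) (e k)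
  have hnonneg : 0 ≤ ⟪V k (y k - p + e k), y k - p + e k⟫ := (hV.isPositive k).inner_nonneg_left _
  have hbase : 0 ≤ ⟪V k (y k - p), y k - p⟫ + M * ‖e k‖ :=
    nonneg_of_mul_nonneg_right (hnonneg.trans hperturb) (by positivity)
  rw [hstep, Real.exp_add, mul_assoc]
  calc ⟪V (k + 1) (y k - p + e k), y k - p + e k⟫
      ≤ (1 + η k) * ⟪V k (y k - p + e k), y k - p + e k⟫ := hV.succ_le k _
    _ ≤ Real.exp (η k) * ⟪V k (y k - p + e k), y k - p + e k⟫ :=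
        mul_le_mul_of_nonneg_right (by linarith [Real.add_one_le_exp (η k)]) hnonneg
    _ ≤ Real.exp (η k) *
          ((1 + ‖e k‖) * (⟪V k (y k - p), y k - p⟫ + M * ‖e k‖)) := by gcongr
    _ ≤ Real.exp (η k) *
          (Real.exp ‖e k‖ * (⟪V k (x k - p), x k - p⟫ - r k + M * ‖e k‖)) := by
        gcongr
        · linarith [Real.add_one_le_exp ‖e k‖]
        · exact hy k

end IsVariableMetric

end VariableMetric

section VariationalInequality

variable {H ι : Type*} [NormedAddCommGroup H] [InnerProductSpace ℝ H]

theorem real_inner_le_mul_sq_add_sq_div {c : ℝ} (hc : 0 < c) (u v : H) :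
    ⟪u, v⟫ ≤ c * ‖u‖ ^ 2 + ‖v‖ ^ 2 / (4 * c) := by
  have hsq : c * ‖u‖ ^ 2 + ‖v‖ ^ 2 / (4 * c) - ‖u‖ * ‖v‖ =
      (2 * c * ‖u‖ - ‖v‖) ^ 2 / (4 * c) := by
    field_simp
    ring
  have hnonneg : 0 ≤ (2 * c * ‖u‖ - ‖v‖) ^ 2 / (4 * c) := by positivity
  linarith [real_inner_le_norm u v]

/-- The operator `B` is `β`-cocoercive: `β • B` is firmly nonexpansive. -/
def IsCocoercive (β : ℝ) (B : H → H) : Prop :=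
  ∀ x y, β * ‖B x - B y‖ ^ 2 ≤ ⟪B x - B y, x - y⟫

/-- The solutions of the variational inequality for `B` on `C`, i.e. the zeros of the sum of `B`
and the normal cone of `C`. -/
def variationalSolutions (B : H → H) (C : Set H) : Set H :=
  {p | p ∈ C ∧ ∀ z ∈ C, 0 ≤ ⟪B p, z - p⟫}

/-- The map `P` is the projection onto `C` for the inner product `⟪V ·, ·⟫`, expressed through its
obtuse-angle characterization. -/
def IsMetricProjection (V : H →L[ℝ] H) (C : Set H) (P : H → H) : Prop :=
  ∀ y, P y ∈ C ∧ ∀ z ∈ C, ⟪V (y - P y), z - P y⟫ ≤ 0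

section Projection

variable {U V : H →L[ℝ] H} {C : Set H} {P : H → H}

theorem IsMetricProjection.inner_apply_sub_le (hP : IsMetricProjection V C P) (y z : H) :
    ⟪V (P y - P z), P y - P z⟫ ≤ ⟪V (y - z), P y - P z⟫ := by
  have hy := (hP y).2 (P z) (hP z).1
  have hz := (hP z).2 (P y) (hP y).1
  simp only [map_sub, inner_sub_left, inner_sub_right] at hy hz ⊢
  linarith

theorem IsMetricProjection.norm_sub_le (hP : IsMetricProjection V C P) (hU : U.IsPositive)
    (hUV : Function.LeftInverse U V) (y z : H) : ‖P y - P z‖ ≤ ‖U‖ * ‖V (y - z)‖ := by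
  rcases (norm_nonneg (P y - P z)).eq_or_lt with hzero | hpos
  · rw [← hzero]
    positivity
  refine le_of_mul_le_mul_right ?_ hpos
  calc ‖P y - P z‖ * ‖P y - P z‖ = ‖P y - P z‖ ^ 2 := (sq _).symm
    _ ≤ ‖U‖ * ⟪V (P y - P z), P y - P z⟫ :=
        sq_norm_le_opNorm_mul_inner_of_leftInverse hU hUV _
    _ ≤ ‖U‖ * (‖V (y - z)‖ * ‖P y - P z‖) := by
        gcongr
        exact (hP.inner_apply_sub_le y z).trans (real_inner_le_norm _ _)
    _ = ‖U‖ * ‖V (y - z)‖ * ‖P y - P z‖ := (mul_assoc _ _ _).symm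

theorem IsMetricProjection.norm_step_sub_step_le (hP : IsMetricProjection V C P)
    (hU : U.IsPositive) (hUV : Function.LeftInverse U V) (hVU : Function.LeftInverse V U) {γ : ℝ}
    (hγ : 0 ≤ γ) (x g b : H) :
    ‖P (x - γ • U (g + b)) - P (x - γ • U g)‖ ≤ γ * ‖U‖ * ‖b‖ := by
  have hdiff : V ((x - γ • U (g + b)) - (x - γ • U g)) = -(γ • b) := by
    simp only [map_sub, map_smul, map_add, hVU _]
    module
  refine (hP.norm_sub_le hU hUV _ _).trans_eq ?_
  rw [hdiff, norm_neg, norm_smul, Real.norm_of_nonneg hγ]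
  ring

theorem IsMetricProjection.mem_of_weaklyTendsto (hP : IsMetricProjection V C P) {μ : ℝ}
    (hV : ∀ z, ‖z‖ ^ 2 ≤ μ * ⟪V z, z⟫) (hVpos : V.IsPositive) {F : Filter ι} [F.NeBot]
    {q : ι → H} (hqC : ∀ i, q i ∈ C) {p : H} (hq : WeaklyTendsto q F p) : p ∈ C := by
  have hlim : Tendsto (fun i => ⟪V (p - P p), q i - P p⟫) F (𝓝 ⟪V (p - P p), p - P p⟫) := by
    simpa only [real_inner_comm _ (V (p - P p))] using
      hq.sub (weaklyTendsto_of_tendsto (tendsto_const_nhds (x := P p))) (V (p - P p))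
  have hzero : ⟪V (p - P p), p - P p⟫ = 0 :=
    (le_of_tendsto hlim (Eventually.of_forall fun i => (hP p).2 _ (hqC i))).antisymm
      (hVpos.inner_nonneg_left _)
  have hnorm : ‖p - P p‖ ^ 2 = 0 :=
    le_antisymm (by simpa only [hzero, mul_zero] using hV (p - P p)) (sq_nonneg _)
  rw [sub_eq_zero.1 (norm_eq_zero.1 (pow_eq_zero_iff two_ne_zero |>.1 hnorm))]
  exact (hP p).1

theorem IsMetricProjection.inner_apply_step_le (hP : IsMetricProjection V C P)
    (hVU : Function.LeftInverse V U) {γ : ℝ} {x g z : H} (hz : z ∈ C) :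
    ⟪V (x - P (x - γ • U g)), z - P (x - γ • U g)⟫ ≤ γ * ⟪g, z - P (x - γ • U g)⟫ := by
  have h := (hP (x - γ • U g)).2 z hz
  rw [sub_right_comm, map_sub, map_smul, hVU, inner_sub_left, real_inner_smul_left] at h
  linarith

end Projection

namespace IsCocoercive

variable {β : ℝ} {B : H → H} {C : Set H}

theorem neg_sq_norm_le_inner (hβ : 0 < β) (hB : IsCocoercive β B) {p q : H}
    (hp : p ∈ variationalSolutions B C) (hq : q ∈ C) (x : H) :
    -(‖x - q‖ ^ 2 / (4 * β)) ≤ ⟪B x, q - p⟫ := by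
  have hyoung := real_inner_le_mul_sq_add_sq_div hβ (B x - B p) (x - q)
  have hsplit : ⟪B x, q - p⟫ = ⟪B x - B p, x - p⟫ - ⟪B x - B p, x - q⟫ + ⟪B p, q - p⟫ := by
    simp only [inner_sub_left, inner_sub_right]
    ring
  linarith [hB x p, hp.2 q hq]

theorem mul_inner_apply_step_le (hβ : 0 < β) (hB : IsCocoercive β B) {U V : H →L[ℝ] H} {P : H → H}
    (hP : IsMetricProjection V C P) (hVU : Function.LeftInverse V U) {u : ℝ}
    (hV : ∀ z, ‖z‖ ^ 2 ≤ u * ⟪V z, z⟫) {γ : ℝ} (hγ : 0 ≤ γ) {x p q : H}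
    (hq : q = P (x - γ • U (B x))) (hp : p ∈ variationalSolutions B C) :
    (1 - γ * u / (4 * β)) * ⟪V (x - q), x - q⟫ ≤ ⟪V (x - q), x - p⟫ := by
  have hproj : ⟪V (x - q), p - q⟫ ≤ γ * ⟪B x, p - q⟫ :=
    hq ▸ hP.inner_apply_step_le hVU hp.1
  have hforward : γ * ⟪B x, p - q⟫ ≤ γ * (u * ⟪V (x - q), x - q⟫ / (4 * β)) := by
    gcongr
    calc ⟪B x, p - q⟫ = -⟪B x, q - p⟫ := by rw [← inner_neg_right, neg_sub]
      _ ≤ ‖x - q‖ ^ 2 / (4 * β) :=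
          neg_le.1 (hB.neg_sq_norm_le_inner hβ hp (hq ▸ (hP _).1) x)
      _ ≤ u * ⟪V (x - q), x - q⟫ / (4 * β) := by gcongr; exact hV _
  have hsplit : ⟪V (x - q), x - p⟫ = ⟪V (x - q), x - q⟫ - ⟪V (x - q), p - q⟫ := by
    rw [← inner_sub_right, sub_sub_sub_cancel_right]
  rw [hsplit]
  linear_combination hproj + hforward

section Demiclosed

variable {F : Filter ι} {x q w : ι → H} {p : H}

theorem tendsto_apply (hβ : 0 < β) (hB : IsCocoercive β B) (hp : p ∈ C)
    (hq : WeaklyTendsto q F p) (hbdd : F.IsBoundedUnder (· ≤ ·) fun i => ‖q i‖)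
    (hxq : Tendsto (fun i => x i - q i) F (𝓝 0)) (hw : Tendsto w F (𝓝 0))
    (h : ∀ i, ∀ z ∈ C, ⟪w i, z - q i⟫ ≤ ⟪B (x i), z - q i⟫) :
    Tendsto (fun i => B (x i)) F (𝓝 (B p)) := by
  have hbound : ∀ i, ‖B (x i) - B p‖ ^ 2 ≤
      2 / β * (‖x i - q i‖ ^ 2 / (4 * (β / 2)) +
        (⟪q i, w i⟫ - ⟪p, w i⟫) + (⟪p, B p⟫ - ⟪q i, B p⟫)) := by
    intro i
    have hsplit : ⟪B (x i) - B p, x i - p⟫ = ⟪B (x i) - B p, x i - q i⟫ - ⟪B (x i), p - q i⟫ +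
        (⟪p, B p⟫ - ⟪q i, B p⟫) := by
      simp only [inner_sub_left, inner_sub_right, real_inner_comm (B p)]
      ring
    have hwi := h i p hp
    rw [inner_sub_right, real_inner_comm p, real_inner_comm (q i)] at hwi
    have hyoung := real_inner_le_mul_sq_add_sq_div (half_pos hβ) (B (x i) - B p) (x i - q i)
    rw [div_mul_eq_mul_div, le_div_iff₀ hβ]
    linarith [hB (x i) p]
  have hupper : Tendsto (fun i => 2 / β * (‖x i - q i‖ ^ 2 / (4 * (β / 2)) +
      (⟪q i, w i⟫ - ⟪p, w i⟫) + (⟪p, B p⟫ - ⟪q i, B p⟫))) F (𝓝 0) := by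
    have h₁ := (hxq.norm.pow 2).div_const (4 * (β / 2))
    have h₂ := (hq.inner_tendsto hbdd hw).sub (tendsto_const_nhds.inner (x := p) hw)
    have h₃ := (hq (B p)).const_sub ⟪p, B p⟫
    simpa using ((h₁.add h₂).add h₃).const_mul (2 / β)
  have hsq : Tendsto (fun i => ‖B (x i) - B p‖ ^ 2) F (𝓝 0) :=
    squeeze_zero (fun i => sq_nonneg _) hbound hupper
  exact tendsto_iff_norm_sub_tendsto_zero.2 (by simpa using hsq.sqrt)

theorem mem_variationalSolutions_of_weaklyTendsto [F.NeBot] (hβ : 0 < β) (hB : IsCocoercive β B)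
    (hp : p ∈ C) (hq : WeaklyTendsto q F p) (hbdd : F.IsBoundedUnder (· ≤ ·) fun i => ‖q i‖)
    (hxq : Tendsto (fun i => x i - q i) F (𝓝 0)) (hw : Tendsto w F (𝓝 0))
    (h : ∀ i, ∀ z ∈ C, ⟪w i, z - q i⟫ ≤ ⟪B (x i), z - q i⟫) :
    p ∈ variationalSolutions B C := by
  refine ⟨hp, fun z hz => ?_⟩
  have hBx := hB.tendsto_apply hβ hp hq hbdd hxq hw h
  have hlim : ∀ {v : ι → H} {u : H}, Tendsto v F (𝓝 u) →
      Tendsto (fun i => ⟪v i, z - q i⟫) F (𝓝 ⟪u, z - p⟫) := fun {v u} hv => by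
    simpa only [inner_sub_right, real_inner_comm] using
      (hv.inner (tendsto_const_nhds (x := z))).sub (hq.inner_tendsto hbdd hv)
  simpa using le_of_tendsto_of_tendsto' (hlim hw) (hlim hBx) fun i => h i z hz

end Demiclosed

end IsCocoercive

end VariationalInequality

section ConvexGradient

variable {H : Type*} [NormedAddCommGroup H] [InnerProductSpace ℝ H] [CompleteSpace H]
  {f : H → ℝ} {f' : H → H}

theorem hasDerivAt_comp_lineMap {x y g : H} {t : ℝ}
    (hf : HasGradientAt f g (AffineMap.lineMap x y t)) :
    HasDerivAt (fun s : ℝ => f (AffineMap.lineMap x y s)) ⟪g, y - x⟫ t := by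
  simpa [Function.comp_def] using hf.hasFDerivAt.comp_hasDerivAt t AffineMap.hasDerivAt_lineMap

theorem add_inner_sub_le_of_convexOn {s : Set H} (hf : ConvexOn ℝ s f) {x y g : H} (hx : x ∈ s)
    (hy : y ∈ s) (hg : HasGradientAt f g x) : f x + ⟪g, y - x⟫ ≤ f y := by
  have hline := hf.comp_affineMap (AffineMap.lineMap x y)
  have hslope : ⟪g, y - x⟫ ≤ f y - f x := by
    simpa [slope_def_field] using hline.le_slope_of_hasDerivAt (x := 0) (y := 1)
      (by simpa using hx) (by simpa using hy) one_pos (hasDerivAt_comp_lineMap (by simpa using hg))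
  linarith

theorem le_add_inner_add_sq_of_lipschitz_gradient {L : ℝ} (hf : ∀ z, HasGradientAt f (f' z) z)
    (hlip : ∀ z w, ‖f' z - f' w‖ ≤ L * ‖z - w‖) (x y : H) :
    f y ≤ f x + ⟪f' x, y - x⟫ + L / 2 * ‖y - x‖ ^ 2 := by
  have hderiv : ∀ t : ℝ, HasDerivAt (fun s : ℝ => f (AffineMap.lineMap x y s))
      ⟪f' (AffineMap.lineMap x y t), y - x⟫ t := fun t => hasDerivAt_comp_lineMap (hf _)
  have hmajorant : ∀ t : ℝ, HasDerivAt
      (fun s => f x + s * ⟪f' x, y - x⟫ + s ^ 2 * (L / 2 * ‖y - x‖ ^ 2))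
      (⟪f' x, y - x⟫ + t * (L * ‖y - x‖ ^ 2)) t := fun t => by
    refine ((((hasDerivAt_id' t).mul_const ⟪f' x, y - x⟫).const_add (f x)).add
      ((hasDerivAt_pow 2 t).mul_const (L / 2 * ‖y - x‖ ^ 2))).congr_deriv ?_
    push_cast
    ring
  have hle : ∀ t ∈ Set.Ico (0 : ℝ) 1, ⟪f' (AffineMap.lineMap x y t), y - x⟫ ≤
      ⟪f' x, y - x⟫ + t * (L * ‖y - x‖ ^ 2) := fun t ht => by
    rw [← sub_le_iff_le_add', ← inner_sub_left]
    calc ⟪f' (AffineMap.lineMap x y t) - f' x, y - x⟫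
        ≤ ‖f' (AffineMap.lineMap x y t) - f' x‖ * ‖y - x‖ := real_inner_le_norm _ _
      _ ≤ L * ‖AffineMap.lineMap x y t - x‖ * ‖y - x‖ := by gcongr; exact hlip _ _
      _ = t * (L * ‖y - x‖ ^ 2) := by
          rw [← dist_eq_norm, dist_lineMap_left, Real.norm_of_nonneg ht.1, dist_comm, dist_eq_norm]
          ring
  have hend := image_le_of_deriv_right_le_deriv_boundary
    (fun t _ => (hderiv t).continuousAt.continuousWithinAt)
    (fun t _ => (hderiv t).hasDerivWithinAt) (by simp)
    (fun t _ => (hmajorant t).continuousAt.continuousWithinAt)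
    (fun t _ => (hmajorant t).hasDerivWithinAt) hle (Set.right_mem_Icc.2 zero_le_one)
  simpa using hend

theorem add_inner_add_sq_le_of_convexOn {L : ℝ} (hL : 0 < L) (hconv : ConvexOn ℝ Set.univ f)
    (hf : ∀ z, HasGradientAt f (f' z) z) (hlip : ∀ z w, ‖f' z - f' w‖ ≤ L * ‖z - w‖) (x y : H) :
    f x + ⟪f' x, y - x⟫ + 1 / (2 * L) * ‖f' x - f' y‖ ^ 2 ≤ f y := by
  -- The point `z` minimizes the gap between the quadratic upper model of `f` at `y` and its linear
  -- lower model at `x`.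
  set d := f' x - f' y with hd
  set z := y + L⁻¹ • d with hz
  have hlower := add_inner_sub_le_of_convexOn hconv (Set.mem_univ x) (Set.mem_univ z) (hf x)
  have hupper := le_add_inner_add_sq_of_lipschitz_gradient hf hlip y z
  have hzx : ⟪f' x, z - x⟫ = ⟪f' x, y - x⟫ + L⁻¹ * ⟪f' x, d⟫ := by
    rw [hz, add_sub_right_comm, inner_add_right, real_inner_smul_right]
  have hzy : z - y = L⁻¹ • d := add_sub_cancel_left _ _
  have hdd : L⁻¹ * ⟪f' x, d⟫ - L⁻¹ * ⟪f' y, d⟫ = L⁻¹ * ‖d‖ ^ 2 := by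
    rw [← mul_sub, ← inner_sub_left, ← hd, real_inner_self_eq_norm_sq]
  have hquad : L / 2 * ‖L⁻¹ • d‖ ^ 2 = L⁻¹ * ‖d‖ ^ 2 - 1 / (2 * L) * ‖d‖ ^ 2 := by
    rw [norm_smul, Real.norm_of_nonneg (inv_nonneg.2 hL.le)]
    field_simp
    ring
  rw [hzy, real_inner_smul_right, hquad] at hupper
  linarith

/-- The Baillon–Haddad theorem. -/
theorem isCocoercive_gradient_of_convexOn {L : ℝ} (hL : 0 < L) (hconv : ConvexOn ℝ Set.univ f)
    (hf : ∀ z, HasGradientAt f (f' z) z) (hlip : ∀ z w, ‖f' z - f' w‖ ≤ L * ‖z - w‖) :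
    IsCocoercive (1 / L) f' := by
  intro x y
  have hxy := add_inner_add_sq_le_of_convexOn hL hconv hf hlip x y
  have hyx := add_inner_add_sq_le_of_convexOn hL hconv hf hlip y x
  have hinner : ⟪f' x, y - x⟫ + ⟪f' y, x - y⟫ = -⟪f' x - f' y, x - y⟫ := by
    simp only [inner_sub_left, inner_sub_right]
    ring
  have hhalves : 1 / L * ‖f' x - f' y‖ ^ 2 = 2 * (1 / (2 * L) * ‖f' x - f' y‖ ^ 2) := by
    field_simp
  rw [norm_sub_rev] at hyx
  linarith

theorem setOf_minimizer_eq_variationalSolutions {C : Set H} (hC : Convex ℝ C)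
    (hconv : ConvexOn ℝ C f) (hf : ∀ z ∈ C, HasGradientAt f (f' z) z) :
    {p | p ∈ C ∧ ∀ y ∈ C, f p ≤ f y} = variationalSolutions f' C := by
  ext p
  refine and_congr_right fun hp => ⟨fun hmin z hz => ?_, fun hvar y hy => ?_⟩
  · have hlocal : IsLocalMinOn f C p := IsMinOn.localize (isMinOn_iff.2 hmin)
    simpa using hlocal.hasFDerivWithinAt_nonneg (hf p hp).hasFDerivAt.hasFDerivWithinAt
      (sub_mem_posTangentConeAt_of_segment_subset (hC.segment_subset hp hz))
  · linarith [add_inner_sub_le_of_convexOn hconv hp hy (hf p hp), hvar y hy]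

end ConvexGradient

section ProjectedForwardIteration

theorem summable_norm_smul_add {E : Type*} [SeminormedAddCommGroup E] [NormedSpace ℝ E]
    {t : ℕ → ℝ} (ht : ∀ k, 0 ≤ t k) {a b d : ℕ → E} {K : ℝ} (hd : ∀ k, ‖d k‖ ≤ K * ‖b k‖)
    (ha : Summable fun k => t k * ‖a k‖) (hb : Summable fun k => t k * ‖b k‖) :
    Summable fun k => ‖t k • (d k + a k)‖ := by
  refine ((hb.mul_left K).add ha).of_nonneg_of_le (fun k => norm_nonneg _) fun k => ?_
  calc ‖t k • (d k + a k)‖ = t k * ‖d k + a k‖ := by rw [norm_smul, Real.norm_of_nonneg (ht k)]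
    _ ≤ t k * (K * ‖b k‖ + ‖a k‖) :=
        mul_le_mul_of_nonneg_left ((norm_add_le _ _).trans (by gcongr; exact hd k)) (ht k)
    _ = K * (t k * ‖b k‖) + t k * ‖a k‖ := by ring

variable {H : Type*} [NormedAddCommGroup H] [InnerProductSpace ℝ H] {U V : ℕ → H →L[ℝ] H}
  {M μ : ℝ} {η : ℕ → ℝ} {β : ℝ} {B : H → H} {C : Set H} {P : ℕ → H → H} {γ : ℕ → ℝ} {γlb : ℝ}

theorem IsVariableMetric.mem_variationalSolutions_of_weaklyTendsto
    (hV : IsVariableMetric V M μ η) (hVU : ∀ k, Function.LeftInverse (V k) (U k))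
    (hP : ∀ k, IsMetricProjection (V k) C (P k)) (hβ : 0 < β) (hB : IsCocoercive β B)
    (hγlb : 0 < γlb) (hγ : ∀ k, γlb ≤ γ k) {F : Filter ℕ} [F.NeBot] {x q : ℕ → H} {p : H}
    (hq : ∀ k, q k = P k (x k - γ k • U k (B (x k))))
    (hxq : Tendsto (fun k => x k - q k) F (𝓝 0)) (hx : WeaklyTendsto x F p)
    (hbdd : F.IsBoundedUnder (· ≤ ·) fun k => ‖x k‖) : p ∈ variationalSolutions B C := by
  have hqp : WeaklyTendsto q F p := hx.of_sub_tendsto_zero hxq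
  have hqbdd : F.IsBoundedUnder (· ≤ ·) fun k => ‖q k‖ :=
    isBoundedUnder_norm_of_sub (by simpa only [norm_sub_rev] using hxq.norm.isBoundedUnder_le) hbdd
  have hpC : p ∈ C := (hP 0).mem_of_weaklyTendsto (hV.sq_norm_le 0) (hV.isPositive 0)
    (fun k => hq k ▸ (hP k _).1) hqp
  have hresidual : Tendsto (fun k => (γ k)⁻¹ • V k (x k - q k)) F (𝓝 0) := by
    refine squeeze_zero_norm (a := fun k => γlb⁻¹ * (M * ‖x k - q k‖)) (fun k => ?_)
      (by simpa using (hxq.norm.const_mul M).const_mul γlb⁻¹)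
    rw [norm_smul, Real.norm_of_nonneg (inv_nonneg.2 (hγlb.le.trans (hγ k)))]
    exact mul_le_mul (inv_anti₀ hγlb (hγ k)) (hV.norm_apply_le k _) (norm_nonneg _)
      (inv_nonneg.2 hγlb.le)
  refine hB.mem_variationalSolutions_of_weaklyTendsto hβ hpC hqp hqbdd hxq hresidual
    fun k z hz => ?_
  rw [real_inner_smul_left, inv_mul_le_iff₀ (hγlb.trans_le (hγ k))]
  exact hq k ▸ (hP k).inner_apply_step_le (hVU k) hz

theorem variable_metric_constrained_minimization_weak_convergence_general [CompleteSpace H]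
    (hβ : 0 < β) (hB : IsCocoercive β B) (hS : (variationalSolutions B C).Nonempty)
    (hV : IsVariableMetric V M μ η) (hUV : ∀ k, Function.LeftInverse (U k) (V k))
    (hVU : ∀ k, Function.LeftInverse (V k) (U k)) (hP : ∀ k, IsMetricProjection (V k) C (P k))
    {lam : ℕ → ℝ} {lamlb τ : ℝ} (hlamlb : 0 < lamlb) (hτ : 0 < τ) (hγlb : 0 < γlb)
    (hlam : ∀ k, lamlb ≤ lam k ∧ lam k ≤ 2 - γ k * ‖U k‖ / (2 * β) - τ) (hγ : ∀ k, γlb ≤ γ k)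
    {a b : ℕ → H} (ha : Summable fun k => lam k * ‖a k‖) (hb : Summable fun k => lam k * ‖b k‖)
    {x : ℕ → H} (hx : ∀ k, x (k + 1) =
      x k + lam k • (P k (x k - γ k • U k (B (x k) + b k)) + a k - x k)) :
    ∃ p ∈ variationalSolutions B C, WeaklyTendsto x atTop p := by
  have hU : ∀ k, (U k).IsPositive := fun k => isPositive_of_leftInverse (hV.isPositive k) (hVU k)
  have hγ0 : ∀ k, 0 ≤ γ k := fun k => hγlb.le.trans (hγ k)
  have hγU : ∀ k, γ k * ‖U k‖ ≤ 4 * β := fun k => by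
    have h : γ k * ‖U k‖ / (2 * β) ≤ 2 := by linarith [hlam k]
    rw [div_le_iff₀ (by positivity)] at h
    linarith
  set q : ℕ → H := fun k => P k (x k - γ k • U k (B (x k)))
  set e : ℕ → H := fun k =>
    lam k • (P k (x k - γ k • U k (B (x k) + b k)) - q k + a k)
  have hxe : ∀ k, x (k + 1) = x k + lam k • (q k - x k) + e k := fun k => by
    rw [hx]
    module
  have hesum : Summable fun k => ‖e k‖ :=
    summable_norm_smul_add (fun k => hlamlb.le.trans (hlam k).1) (fun k =>
      ((hP k).norm_step_sub_step_le (hU k) (hUV k) (hVU k) (hγ0 k) _ _ _).trans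
        (mul_le_mul_of_nonneg_right (hγU k) (norm_nonneg _))) ha hb
  have hfejer : ∀ p ∈ variationalSolutions B C,
      (∃ c, Tendsto (fun k => ⟪V k (x k - p), x k - p⟫) atTop (𝓝 c)) ∧
        Tendsto (fun k => lamlb * τ * ⟪V k (x k - q k), x k - q k⟫) atTop (𝓝 0) := fun p hp =>
    hV.exists_tendsto_and_tendsto_zero_of_quasiFejer
      (fun k => mul_nonneg (by positivity) ((hV.isPositive k).inner_nonneg_left _)) hxe hesum
      fun k => inner_apply_relaxation_le_of_isPositive (hV.isPositive k) hτ.le hlamlb.le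
        (hlam k).1 ((hlam k).2.trans_eq (by ring)) (hB.mul_inner_apply_step_le hβ (hP k) (hVU k)
          (sq_norm_le_opNorm_mul_inner_of_leftInverse (hU k) (hUV k)) (hγ0 k) rfl hp)
  obtain ⟨p₀, hp₀⟩ := hS
  obtain ⟨⟨c₀, hc₀⟩, hgap⟩ := hfejer p₀ hp₀
  have hxq : Tendsto (fun k => x k - q k) atTop (𝓝 0) := hV.tendsto_zero <| by
    simpa only [inv_mul_cancel_left₀ (mul_pos hlamlb hτ).ne', mul_zero] using
      hgap.const_mul (lamlb * τ)⁻¹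
  have hbdd := isBoundedUnder_norm_of_sub (hV.isBoundedUnder_norm hc₀) isBoundedUnder_const
  exact hV.exists_weaklyTendsto ⟨p₀, hp₀⟩ (fun p hp => (hfejer p hp).1) fun F hF p hp =>
    hV.mem_variationalSolutions_of_weaklyTendsto hVU hP hβ hB hγlb hγ (fun _ => rfl)
      (hxq.mono_left hF) hp (hbdd.mono hF)

end ProjectedForwardIteration

/-- weak convergence of the variable metric projected gradient algorithm
for constrained convex minimization. -/
theorem variable_metric_constrained_minimization_weak_convergence
    {H : Type*} [NormedAddCommGroup H] [InnerProductSpace ℝ H] [CompleteSpace H]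
    (C : Set H) (hCne : C.Nonempty) (hCclosed : IsClosed C) (hCconv : Convex ℝ C)
    (f : H → ℝ) (f' : H → H)
    (hfconv : ConvexOn ℝ Set.univ f)
    (hfgrad : ∀ z : H, HasGradientAt f (f' z) z)
    (L : ℝ) (hL : 0 < L)
    (hflip : ∀ z w : H, ‖f' z - f' w‖ ≤ L * ‖z - w‖)
    (β : ℝ) (hβ : β = 1 / L)
    (hΩ : {xs : H | xs ∈ C ∧ ∀ y ∈ C, f xs ≤ f y}.Nonempty)
    (α : ℝ) (hα : 0 < α) (μ : ℝ) (hμ : 0 < μ)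
    (U V : ℕ → H →L[ℝ] H)
    (hU : ∀ k, IsSelfAdjoint (U k))
    (hUpos : ∀ k, ∀ z : H, ⟪U k z, z⟫ ≥ α * ‖z‖ ^ 2)
    (hV : ∀ k, IsSelfAdjoint (V k))
    (hVU : ∀ k, (V k).comp (U k) = ContinuousLinearMap.id ℝ H)
    (hUV : ∀ k, (U k).comp (V k) = ContinuousLinearMap.id ℝ H)
    (hUnorm : ∀ k, ‖U k‖ ≤ μ)
    (η : ℕ → ℝ) (hη0 : ∀ k, 0 ≤ η k) (hηsum : Summable η)
    (hUmono : ∀ k, ∀ z : H, (1 + η k) * ⟪U (k + 1) z, z⟫ ≥ ⟪U k z, z⟫)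
    (γ lam αk : ℕ → ℝ)
    (hγ : ∀ k, 0 < γ k ∧ γ k < 2 * β / ‖U k‖)
    (hαk : ∀ k, αk k = 2 * β / (4 * β - γ k * ‖U k‖))
    (lamlb τ γlb : ℝ) (hlamlb : 0 < lamlb) (hτ : 0 < τ) (hγlb : 0 < γlb)
    (hlam : ∀ k, lamlb ≤ lam k ∧ lam k ≤ 1 / αk k - τ)
    (hγ' : ∀ k, γlb ≤ γ k)
    (a b : ℕ → H)
    (ha : Summable (fun k => lam k * ‖a k‖))
    (hb : Summable (fun k => lam k * ‖b k‖))
    (P : ℕ → H → H)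
    (hPmem : ∀ k, ∀ y : H, P k y ∈ C)
    (hPproj : ∀ k, ∀ y : H, ∀ z ∈ C, ⟪V k (y - P k y), z - P k y⟫ ≤ 0)
    (x : ℕ → H)
    (hx : ∀ k, x (k + 1) =
      x k + lam k • (P k (x k - γ k • U k (f' (x k) + b k)) + a k - x k)) :
    ∃ p ∈ {xs : H | xs ∈ C ∧ ∀ y ∈ C, f xs ≤ f y},
      ∀ y : H, Tendsto (fun k => ⟪x k, y⟫) atTop (nhds ⟪p, y⟫) := by
  have hβ0 : 0 < β := hβ ▸ one_div_pos.2 hL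
  have hUpos' : ∀ k, (U k).IsPositive := fun k =>
    isPositive_of_coercive (ContinuousLinearMap.isSelfAdjoint_iff_isSymmetric.1 (hU k)) hα.le
      (hUpos k)
  have hUV' : ∀ k, Function.LeftInverse (U k) (V k) := fun k => DFunLike.congr_fun (hUV k)
  have hrelax : ∀ k, 1 / αk k = 2 - γ k * ‖U k‖ / (2 * β) := fun k => by
    rw [hαk, one_div_div]
    field_simp
    ring
  rw [setOf_minimizer_eq_variationalSolutions hCconv (hfconv.subset C.subset_univ hCconv)
    fun z _ => hfgrad z] at hΩ ⊢
  exact variable_metric_constrained_minimization_weak_convergence_general hβ0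
    (hβ ▸ isCocoercive_gradient_of_convexOn hL hfconv hfgrad hflip) hΩ
    (isVariableMetric_of_leftInverse hα hUpos' hUpos hUnorm hUV' hUmono hη0 hηsum) hUV'
    (fun k => DFunLike.congr_fun (hVU k)) (fun k y => ⟨hPmem k y, hPproj k y⟩) hlamlb hτ hγlb
    (fun k => hrelax k ▸ hlam k) hγ' ha hb hx
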